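/- For every N ≥ 1, the characteristic polynomial of the matrix S_N factors as det(x·I_{N+1} − S_N) = Π_{j=0}^{N} (x − 2·(2j − N)) over ℚ (equivalently over ℂ); in particular, the eigenvalues of S_N are exactly the N+1 even integers 2(2j − N), j = 0, …, N, and the matrix H_N = (1/2)·S_N has eigenvalues 2j − N, j = 0, …, N. -/

import Mathlib

open Matrix Polynomial

/-- The matrix `S_N` of da Fonseca–Kılıç–Pereira, over `ℚ`. -/
def Smat (N : ℕ) : Matrix (Fin (N+1)) (Fin (N+1)) ℚ :=
  Matrix.of fun k l =>
    if (l : ℕ) = (k : ℕ) + 1 then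
      (if (k : ℕ) = N - 1 then (2 * N : ℚ) else ((k : ℕ) + 1 : ℚ))
    else if (l : ℕ) + 1 = (k : ℕ) then ((2 * N + 1 - (k : ℕ) : ℕ) : ℚ)
    else 0

/-!
On coefficient vectors of polynomials of degree at most `n`, the Sylvester–Kac matrix `K_n` acts as
the operator `p ↦ (1 - X ^ 2) p' + n X p`. Its Leibniz rule shows that `(1 + X) ^ a (1 - X) ^ b`,
with `a + b = n`, is an eigenvector for `a - b`. For `n = 2 N` the operator preserves the
palindromic polynomials, and `S_N` is its action on them once the coefficients at `k` and `2 N - k`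
are added together. The eigenvector is palindromic when `b` is even, which gives the `N + 1`
distinct eigenvalues `2 j - 2 (N - j)` of `S_N`.
-/

section Charpoly

variable {n R : Type*} [Fintype n] [DecidableEq n] [CommRing R] [IsDomain R]

theorem exists_mulVec_eq_smul_iff_isRoot_charpoly (A : Matrix n n R) (x : R) :
    (∃ u : n → R, u ≠ 0 ∧ A *ᵥ u = x • u) ↔ A.charpoly.IsRoot x := by
  rw [IsRoot.def, eval_charpoly, ← exists_mulVec_eq_zero_iff]
  simp only [sub_mulVec, sub_eq_zero, scalar_apply, ← smul_one_eq_diagonal, smul_mulVec,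
    one_mulVec, eq_comm]

theorem charpoly_eq_prod_X_sub_C_of_mulVec_eq_smul (A : Matrix n n R) {μ : n → R}
    (hμ : Function.Injective μ) (hA : ∀ i, ∃ u : n → R, u ≠ 0 ∧ A *ᵥ u = μ i • u) :
    A.charpoly = ∏ i, (X - C (μ i)) := by
  have hroots : Finset.univ.val.map μ ≤ A.charpoly.roots := by
    refine (Multiset.le_iff_subset (Finset.univ.nodup.map hμ)).2 fun x hx => ?_
    obtain ⟨i, -, rfl⟩ := Multiset.mem_map.1 hx
    exact (mem_roots A.charpoly_monic.ne_zero).2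
      ((exists_mulVec_eq_smul_iff_isRoot_charpoly A (μ i)).1 (hA i))
  have hdvd : ∏ i, (X - C (μ i)) ∣ A.charpoly := by
    rwa [← Multiset.prod_X_sub_C_dvd_iff_le_roots A.charpoly_monic.ne_zero,
      Multiset.map_map] at hroots
  refine eq_of_monic_of_dvd_of_natDegree_le (monic_prod_X_sub_C _ _) A.charpoly_monic hdvd ?_
  rw [charpoly_natDegree_eq_dim, natDegree_finsetProd_X_sub_C_eq_card, Finset.card_univ]

end Charpoly

theorem reflect_pow {R : Type*} [Semiring R] {p : R[X]} {d : ℕ} (hp : p.natDegree ≤ d) (n : ℕ) :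
    (p ^ n).reflect (d * n) = p.reflect d ^ n := by
  induction n with
  | zero => simp
  | succ n ih =>
    have hpn : (p ^ n).natDegree ≤ d * n := (natDegree_pow_le_of_le n hp).trans_eq (mul_comm _ _)
    rw [pow_succ, mul_add_one, reflect_mul _ _ hpn hp, ih, pow_succ]

section KacOperator

variable {R : Type*} [CommRing R]

/-- The Sylvester–Kac matrix `K_n` as an operator on generating polynomials: row `k` of `K_n`
has the entries `k + 1` at `k + 1` and `n + 1 - k` at `k - 1`. -/
noncomputable def kacOperator (n : ℕ) (p : R[X]) : R[X] :=
  (1 - X ^ 2) * derivative p + (n : R[X]) * X * p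

theorem coeff_zero_kacOperator (n : ℕ) (p : R[X]) : (kacOperator n p).coeff 0 = p.coeff 1 := by
  simp [kacOperator, mul_coeff_zero, coeff_derivative]

theorem coeff_succ_kacOperator (n k : ℕ) (p : R[X]) :
    (kacOperator n p).coeff (k + 1) = (k + 2) * p.coeff (k + 2) + (n - k) * p.coeff k := by
  have hX : (X * derivative p).coeff k = k * p.coeff k := by
    cases k <;> simp [coeff_derivative, mul_comm]
  have h : kacOperator n p = derivative p - X * (X * derivative p) + C (n : R) * (X * p) := by
    rw [kacOperator, C_eq_natCast]
    ring
  rw [h, coeff_add, coeff_sub, coeff_C_mul, coeff_X_mul, coeff_X_mul, hX, coeff_derivative]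
  push_cast
  ring

theorem kacOperator_mul (m n : ℕ) (p q : R[X]) :
    kacOperator (m + n) (p * q) = kacOperator m p * q + p * kacOperator n q := by
  simp only [kacOperator, derivative_mul, Nat.cast_add]
  ring

theorem kacOperator_pow {m : ℕ} {p : R[X]} {c : R} (hp : kacOperator m p = c • p) (n : ℕ) :
    kacOperator (m * n) (p ^ n) = (n * c) • p ^ n := by
  induction n with
  | zero => simp [kacOperator]
  | succ n ih =>
    rw [pow_succ, mul_add_one, kacOperator_mul, ih, hp, smul_mul_assoc, mul_smul_comm, ← add_smul,
      Nat.cast_succ, add_one_mul]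

theorem kacOperator_one_add_X : kacOperator 1 (1 + X : R[X]) = (1 : R) • (1 + X) := by
  simp only [kacOperator, derivative_add, derivative_one, derivative_X, Nat.cast_one,
    smul_eq_C_mul, map_one]
  ring

theorem kacOperator_one_sub_X : kacOperator 1 (1 - X : R[X]) = (-1 : R) • (1 - X) := by
  simp only [kacOperator, derivative_sub, derivative_one, derivative_X, Nat.cast_one,
    smul_eq_C_mul, map_neg, map_one]
  ring

variable (R) in
/-- The generating polynomial of the eigenvector of `K_{a+b}` for the eigenvalue `a - b`. -/
noncomputable def kacEigenpoly (a b : ℕ) : R[X] := (1 + X) ^ a * (1 - X) ^ b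

theorem coeff_zero_kacEigenpoly (a b : ℕ) : (kacEigenpoly R a b).coeff 0 = 1 := by
  simp [kacEigenpoly, coeff_zero_eq_eval_zero]

theorem kacOperator_kacEigenpoly (a b : ℕ) :
    kacOperator (a + b) (kacEigenpoly R a b) = (a - b : R) • kacEigenpoly R a b := by
  have ha := kacOperator_pow (kacOperator_one_add_X (R := R)) a
  have hb := kacOperator_pow (kacOperator_one_sub_X (R := R)) b
  rw [one_mul] at ha hb
  rw [kacEigenpoly, kacOperator_mul, ha, hb, smul_mul_assoc, mul_smul_comm, ← add_smul]
  ring_nf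

theorem reflect_kacEigenpoly (a b : ℕ) :
    (kacEigenpoly R a b).reflect (a + b) = (-1) ^ b * kacEigenpoly R a b := by
  have hadd : (1 + X : R[X]).natDegree ≤ 1 := by compute_degree
  have hsub : (1 - X : R[X]).natDegree ≤ 1 := by compute_degree
  have ha : ((1 + X : R[X]) ^ a).reflect a = (1 + X) ^ a := by
    simpa [add_comm] using reflect_pow hadd a
  have hb : ((1 - X : R[X]) ^ b).reflect b = (-1) ^ b * (1 - X) ^ b := by
    simpa [← mul_pow] using reflect_pow hsub b
  rw [kacEigenpoly, reflect_mul _ _ (by simpa using natDegree_pow_le_of_le a hadd)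
    (by simpa using natDegree_pow_le_of_le b hsub), ha, hb, mul_left_comm]

end KacOperator

/-- Folds the coefficients of a palindromic polynomial of degree at most `2 * N` about the middle
one: the entry at `k` is the sum of the coefficients over the set `{k, 2 * N - k}`. -/
noncomputable def foldCoeff (N : ℕ) : ℚ[X] →ₗ[ℚ] Fin (N + 1) → ℚ :=
  LinearMap.pi fun k => (if (k : ℕ) = N then 1 else 2 : ℚ) • lcoeff ℚ k

theorem foldCoeff_apply (N : ℕ) (p : ℚ[X]) (k : Fin (N + 1)) :
    foldCoeff N p k = (if (k : ℕ) = N then 1 else 2) * p.coeff k :=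
  rfl

theorem Smat_mul_foldCoeff (N : ℕ) (p : ℚ[X]) (k l : Fin (N + 1)) :
    Smat N k l * foldCoeff N p l =
      (if (l : ℕ) = k + 1 then 2 * ((k + 1) * p.coeff (k + 1)) else 0) +
        if (l : ℕ) + 1 = k then 2 * ((2 * N - l) * p.coeff l) else 0 := by
  obtain ⟨k, hk⟩ := k
  obtain ⟨l, hl⟩ := l
  simp only [Smat, of_apply, foldCoeff_apply]
  rcases eq_or_ne l (k + 1) with rfl | hup
  · rw [if_pos rfl, if_pos rfl, if_neg (show ¬ k + 1 + 1 = k by omega), add_zero]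
    rcases eq_or_ne (k + 1) N with rfl | hN
    · rw [if_pos (by omega), if_pos rfl]
      push_cast
      ring
    · rw [if_neg (by omega), if_neg hN]
      ring
  rw [if_neg hup, if_neg hup, zero_add]
  rcases eq_or_ne (l + 1) k with rfl | hlow
  · rw [if_pos rfl, if_pos rfl, if_neg (by omega), Nat.add_sub_add_right, Nat.cast_sub (by omega)]
    push_cast
    ring
  · rw [if_neg hlow, if_neg hlow, zero_mul]

theorem Smat_mulVec_foldCoeff_apply (N : ℕ) (p : ℚ[X]) (k : Fin (N + 1)) :
    (Smat N *ᵥ foldCoeff N p) k = ∑ l ∈ Finset.range (N + 1),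
      ((if l = k + 1 then 2 * ((k + 1) * p.coeff (k + 1)) else 0) +
        if l + 1 = k then 2 * ((2 * N - l) * p.coeff l) else 0) := by
  rw [← Fin.sum_univ_eq_sum_range, mulVec, dotProduct]
  exact Finset.sum_congr rfl fun l _ => Smat_mul_foldCoeff N p k l

theorem Smat_mulVec_foldCoeff_zero {N : ℕ} (hN : 1 ≤ N) (p : ℚ[X]) :
    (Smat N *ᵥ foldCoeff N p) 0 = 2 * p.coeff 1 := by
  simp [Smat_mulVec_foldCoeff_apply, Nat.one_le_iff_ne_zero.1 hN]

theorem Smat_mulVec_foldCoeff_succ {N k : ℕ} (hk : k + 1 < N + 1) (p : ℚ[X]) :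
    (Smat N *ᵥ foldCoeff N p) ⟨k + 1, hk⟩ =
      (if k + 1 = N then 0 else 2 * ((k + 2) * p.coeff (k + 2))) +
        2 * ((2 * N - k) * p.coeff k) := by
  have hup : k + 1 + 1 ∈ Finset.range (N + 1) ↔ ¬ k + 1 = N := by grind
  have hlow : k ∈ Finset.range (N + 1) := by grind
  simp only [Smat_mulVec_foldCoeff_apply, Finset.sum_add_distrib, add_left_inj,
    Finset.sum_ite_eq', hup, hlow, if_true, ite_not]
  push_cast
  ring_nf

theorem Smat_mulVec_foldCoeff {N : ℕ} (hN : 1 ≤ N) {p : ℚ[X]} (hp : p.reflect (2 * N) = p) :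
    Smat N *ᵥ foldCoeff N p = foldCoeff N (kacOperator (2 * N) p) := by
  ext ⟨k, hk⟩
  rw [foldCoeff_apply]
  cases k with
  | zero =>
    rw [coeff_zero_kacOperator, if_neg (by grind)]
    exact Smat_mulVec_foldCoeff_zero hN p
  | succ k =>
    rw [Smat_mulVec_foldCoeff_succ, coeff_succ_kacOperator]
    split_ifs with hkN
    · have hsymm : p.coeff (k + 2) = p.coeff k := by
        conv_lhs => rw [← hp, coeff_reflect, revAt_le (by omega)]
        congr 1
        omega
      rw [hsymm, ← hkN]
      push_cast
      ring
    · push_cast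
      ring

theorem exists_Smat_mulVec_eq_smul {N : ℕ} (hN : 1 ≤ N) (j : Fin (N + 1)) :
    ∃ u : Fin (N + 1) → ℚ, u ≠ 0 ∧ Smat N *ᵥ u = (2 * (2 * (j : ℕ) - N) : ℚ) • u := by
  obtain ⟨m, hm⟩ := Nat.exists_eq_add_of_le j.is_le
  have hdeg : 2 * N = 2 * j + 2 * m := by omega
  set e := kacEigenpoly ℚ (2 * j) (2 * m)
  have he : e.reflect (2 * N) = e := by
    rw [hdeg, reflect_kacEigenpoly, (even_two_mul m).neg_one_pow, one_mul]
  refine ⟨foldCoeff N e, fun h => ?_, ?_⟩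
  · have h0 := congrFun h 0
    have hN0 : 0 ≠ N := by omega
    simp [foldCoeff_apply, hN0, e, coeff_zero_kacEigenpoly] at h0
  · rw [Smat_mulVec_foldCoeff hN he, hdeg, kacOperator_kacEigenpoly, map_smul]
    have hmQ : (N : ℚ) = (j : ℕ) + m := by exact_mod_cast hm
    congr 1
    rw [hmQ]
    push_cast
    ring

theorem charpoly_Smat {N : ℕ} (hN : 1 ≤ N) :
    (Smat N).charpoly = ∏ j : Fin (N + 1), (X - C (2 * (2 * (j : ℕ) - (N : ℚ)))) := by
  refine charpoly_eq_prod_X_sub_C_of_mulVec_eq_smul _ (fun i j h => ?_)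
    (exists_Smat_mulVec_eq_smul hN)
  simpa [Fin.val_inj] using h

theorem stmt_12 (N : ℕ) (hN : 1 ≤ N) :
    (Smat N).charpoly =
      (∏ j : Fin (N+1), (X - C (2 * (2 * (j : ℕ) - (N : ℚ))))) ∧
      (∀ x : ℚ, (∃ u : Fin (N+1) → ℚ, u ≠ 0 ∧ (Smat N).mulVec u = x • u) ↔
        ∃ j : Fin (N+1), x = 2 * (2 * (j : ℕ) - (N : ℚ))) ∧
      (∀ x : ℚ, (∃ u : Fin (N+1) → ℚ, u ≠ 0 ∧
          ((2⁻¹ : ℚ) • Smat N).mulVec u = x • u) ↔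
        ∃ j : Fin (N+1), x = 2 * (j : ℕ) - (N : ℚ)) := by
  have eigenvalue_iff (x : ℚ) : (∃ u : Fin (N+1) → ℚ, u ≠ 0 ∧ (Smat N).mulVec u = x • u) ↔
      ∃ j : Fin (N+1), x = 2 * (2 * (j : ℕ) - (N : ℚ)) := by
    rw [exists_mulVec_eq_smul_iff_isRoot_charpoly, charpoly_Smat hN, isRoot_prod]
    simp only [Finset.mem_univ, true_and, root_X_sub_C, eq_comm]
  refine ⟨charpoly_Smat hN, eigenvalue_iff, fun x => ?_⟩
  have h := eigenvalue_iff (2 * x)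
  simp only [mul_right_inj' (two_ne_zero' ℚ), mul_smul] at h
  simpa only [smul_mulVec, inv_smul_eq_iff₀ (two_ne_zero' ℚ)] using h
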